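/- Let φ ∈ 𝒮(ℝ^d) and let G : ℝ^d → ℂ be uniformly continuous. Then ‖G P_h − P_h G‖_{B(L²(ℝ^d), ℓ²(hℤ^d))} → 0 as h → 0, where G P_h − P_h G is the operator u ↦ ( z ↦ h^{−d} ∫_{ℝ^d} (G(z) − G(x)) conj(φ(h⁻¹(x−z))) u(x) dx ), i.e. the commutator of the multiplication operators by G on L²(ℝ^d) and on ℓ²(hℤ^d) with P_h. -/

import Mathlib

open MeasureTheory Complex Real
open scoped ENNReal ComplexConjugate

noncomputable section

abbrev Euc (d : ℕ) : Type := EuclideanSpace ℝ (Fin d)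
abbrev Zd (d : ℕ) : Type := Fin d → ℤ

instance (d : ℕ) : MeasurableSingletonClass (Zd d) := by
  constructor
  intro f
  have : ({f} : Set (Zd d)) = Set.univ.pi fun j => {f j} := by
    ext g; simp [Set.eq_univ_iff_forall, funext_iff, Set.mem_pi, eq_comm]
  rw [this]
  exact MeasurableSet.univ_pi fun j => measurableSet_singleton _

/-- The measure on `ℤ^d` giving mass `h^d` to each point, so that `L²` of this measure is
`ℓ²(hℤ^d)` with norm `‖v‖_h² = h^d ∑_z |v(hz)|²`. -/
def latMeas (d : ℕ) (h : ℝ) : Measure (Zd d) := (ENNReal.ofReal (h ^ d)) • Measure.count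

/-- `L²(ℝ^d)`. -/
abbrev L2 (d : ℕ) := Lp ℂ 2 (volume : Measure (Euc d))

/-- `ℓ²(hℤ^d)`. -/
abbrev l2h (d : ℕ) (h : ℝ) := Lp ℂ 2 (latMeas d h)

/-- The lattice point `hz ∈ ℝ^d` associated to `z ∈ ℤ^d`. -/
def latPt (d : ℕ) (h : ℝ) (z : Zd d) : Euc d :=
  (EuclideanSpace.equiv (Fin d) ℝ).symm fun j => h * (z j : ℝ)

theorem aux_growth {d : ℕ} (G : Euc d → ℂ) (hG : UniformContinuous G) (ε : ℝ) (hε : 0 < ε) :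
    ∃ δ > (0 : ℝ), ∀ x y, ‖G x - G y‖ ≤ ε * (1 + ‖x - y‖ / δ) := by
  obtain ⟨δ, hδ, H⟩ := Metric.uniformContinuous_iff.1 hG ε hε
  refine ⟨δ, hδ, fun x y => ?_⟩
  set r := ‖x - y‖ / δ with hr
  have hr0 : 0 ≤ r := by positivity
  set n : ℕ := ⌊r⌋₊ + 1 with hn
  have hn1 : r < n := by rw [hn]; push_cast; exact Nat.lt_floor_add_one r
  have hn2 : (n : ℝ) ≤ r + 1 := by
    rw [hn]; push_cast; linarith [Nat.floor_le hr0]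
  have hnpos : (0 : ℝ) < n := lt_of_le_of_lt hr0 hn1
  let f : ℕ → ℂ := fun k => G (x + ((k : ℝ) / n) • (y - x))
  have hstep : ∀ {k : ℕ}, k < n → dist (f k) (f (k + 1)) ≤ ε := by
    intro k _
    refine (H ?_).le
    rw [dist_add_left, dist_eq_norm, ← sub_smul, norm_smul, norm_sub_rev y x]
    have : ((k : ℝ) / n - ((k + 1 : ℕ) : ℝ) / n) = - (1 / n) := by
      push_cast; field_simp; ring
    rw [this, norm_neg, Real.norm_of_nonneg (by positivity)]
    have h1 : ‖x - y‖ < n * δ := by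
      rw [hr, div_lt_iff₀ hδ] at hn1; exact hn1
    rw [one_div, inv_mul_lt_iff₀ hnpos]; exact h1
  have h2 := dist_le_range_sum_of_dist_le (f := f) n (d := fun _ => ε) hstep
  have h0 : f 0 = G x := by simp [f]
  have hN : f n = G y := by simp [f, hnpos.ne']
  rw [h0, hN, dist_eq_norm] at h2
  simp only [Finset.sum_const, Finset.card_range, nsmul_eq_mul] at h2
  nlinarith

def auxW (d : ℕ) (y : Euc d) : ℝ≥0∞ := ENNReal.ofReal ((1 + ‖y‖) ^ (-((d : ℝ) + 1)))

theorem auxW_meas (d : ℕ) : Measurable (auxW d) := by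
  unfold auxW; fun_prop

theorem auxW_fin (d : ℕ) : ∫⁻ y, auxW d y < ∞ := by
  unfold auxW
  apply finite_integral_one_add_norm
  simp

theorem aux_scale (d : ℕ) (h : ℝ) (hh : 0 < h) (a : Euc d) (f : Euc d → ℝ≥0∞)
    (hf : Measurable f) :
    ∫⁻ x, f (h⁻¹ • (x - a)) = ENNReal.ofReal (h ^ d) * ∫⁻ x, f x := by
  rw [lintegral_sub_right_eq_self (fun x => f (h⁻¹ • x)) a]
  have h1 := Measure.map_addHaar_smul (volume : Measure (Euc d)) (inv_ne_zero hh.ne')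
  have h2 : ∫⁻ x, f (h⁻¹ • x) = ∫⁻ x, f x ∂(Measure.map (h⁻¹ • ·) (volume : Measure (Euc d))) := by
    rw [lintegral_map hf (by fun_prop)]
  rw [h2, h1, lintegral_smul_measure]
  simp [abs_of_pos hh]

theorem aux_cs {α : Type*} [MeasurableSpace α] (μ : Measure α) (f g : α → ℝ≥0∞)
    (hf : AEMeasurable f μ) (hg : AEMeasurable g μ) :
    (∫⁻ x, f x * g x ∂μ) ^ 2 ≤ (∫⁻ x, f x ∂μ) * ∫⁻ x, f x * g x ^ 2 ∂μ := by
  have h1 := ENNReal.lintegral_mul_le_Lp_mul_Lq μ Real.HolderConjugate.two_two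
    (f := fun x => f x ^ (1 / 2 : ℝ)) (g := fun x => f x ^ (1 / 2 : ℝ) * g x)
    (hf.pow_const _) ((hf.pow_const _).mul hg)
  have hsq : ∀ t : ℝ≥0∞, (t ^ (1 / 2 : ℝ)) ^ (2 : ℝ) = t := by
    intro t; rw [← ENNReal.rpow_mul]; norm_num
  have hm : ∀ t : ℝ≥0∞, t ^ (1 / 2 : ℝ) * t ^ (1 / 2 : ℝ) = t := by
    intro t
    have := hsq t
    rwa [ENNReal.rpow_two, sq] at this
  simp only [Pi.mul_apply, ← mul_assoc, hm, ENNReal.mul_rpow_of_nonneg _ _ (zero_le_two (α := ℝ)),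
    hsq] at h1
  calc _ ≤ ((∫⁻ x, f x ∂μ) ^ (1 / 2 : ℝ) * (∫⁻ x, f x * g x ^ (2 : ℝ) ∂μ) ^ (1 / 2 : ℝ)) ^ 2 := by
        gcongr
    _ = _ := by
        rw [mul_pow, sq, hm, sq, hm]; simp only [ENNReal.rpow_two]

theorem aux_latPt_dist (d : ℕ) (z z' : Zd d) (hz : z ≠ z') :
    1 ≤ dist (latPt d 1 z) (latPt d 1 z') := by
  obtain ⟨j, hj⟩ := Function.ne_iff.1 hz
  have h1 : ‖(latPt d 1 z - latPt d 1 z') j‖ ≤ ‖latPt d 1 z - latPt d 1 z'‖ :=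
    PiLp.norm_apply_le _ j
  rw [dist_eq_norm]
  refine le_trans ?_ h1
  have h2 : (latPt d 1 z - latPt d 1 z') j = ((z j - z' j : ℤ) : ℝ) := by
    simp [latPt]
  rw [h2, Real.norm_eq_abs, ← Int.cast_abs]
  exact_mod_cast Int.one_le_abs (sub_ne_zero.2 hj)

theorem aux_ball (d : ℕ) (y a x : Euc d) (hx : x ∈ Metric.ball a (1 / 2)) :
    auxW d (y - a) ≤ ENNReal.ofReal ((2 : ℝ) ^ ((d : ℝ) + 1)) * auxW d (y - x) := by
  unfold auxW
  rw [← ENNReal.ofReal_mul (by positivity)]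
  apply ENNReal.ofReal_le_ofReal
  have h1 : ‖y - x‖ ≤ ‖y - a‖ + ‖x - a‖ := by
    have : y - x = (y - a) - (x - a) := by abel
    rw [this]; exact norm_sub_le _ _
  rw [mem_ball_iff_norm] at hx
  have h2 : 1 + ‖y - x‖ ≤ 2 * (1 + ‖y - a‖) := by
    have := norm_nonneg (y - a); linarith
  have h3 := Real.rpow_le_rpow_of_nonpos (z := -((d : ℝ) + 1)) (by positivity) h2
    (by have : (0 : ℝ) ≤ d := by positivity
        linarith)
  rw [Real.mul_rpow (by positivity) (by positivity)] at h3
  calc _ = (2 : ℝ) ^ ((d : ℝ) + 1) * (2 ^ (-((d : ℝ) + 1)) * (1 + ‖y - a‖) ^ (-((d : ℝ) + 1))) := by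
        rw [← mul_assoc, ← Real.rpow_add (by norm_num)]; simp
    _ ≤ _ := by gcongr

theorem aux_sum (d : ℕ) : ∃ S : ℝ≥0∞, S < ∞ ∧ ∀ y : Euc d,
    ∑' z : Zd d, auxW d (y - latPt d 1 z) ≤ S := by
  set v : ℝ≥0∞ := volume (Metric.ball (0 : Euc d) (1 / 2)) with hv
  have hv0 : v ≠ 0 := (Metric.measure_ball_pos _ _ (by norm_num)).ne'
  have hvt : v ≠ ∞ := measure_ball_lt_top.ne
  set c := ENNReal.ofReal ((2 : ℝ) ^ ((d : ℝ) + 1)) with hc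
  refine ⟨c * (∫⁻ y, auxW d y) * v⁻¹, ?_, fun y => ?_⟩
  · exact ENNReal.mul_lt_top (ENNReal.mul_lt_top (by simp [hc]) (auxW_fin d))
      (by simpa using pos_iff_ne_zero.2 hv0)
  · rw [← div_eq_mul_inv, ENNReal.le_div_iff_mul_le (Or.inl hv0) (Or.inl hvt), ← ENNReal.tsum_mul_right]
    have hd : Pairwise (Function.onFun Disjoint fun z : Zd d => Metric.ball (latPt d 1 z) (1 / 2)) := by
      intro z z' hz
      apply Metric.ball_disjoint_ball
      have := aux_latPt_dist d z z' hz
      linarith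
    calc ∑' z : Zd d, auxW d (y - latPt d 1 z) * v
        ≤ ∑' z : Zd d, ∫⁻ x in Metric.ball (latPt d 1 z) (1 / 2), c * auxW d (y - x) := by
          refine ENNReal.tsum_le_tsum fun z => ?_
          have : v = volume (Metric.ball (latPt d 1 z) (1 / 2)) := by
            rw [hv, Measure.addHaar_ball_center volume (latPt d 1 z)]
          rw [this, ← setLIntegral_const]
          exact setLIntegral_mono' measurableSet_ball fun x hx => aux_ball d y _ x hx
      _ = ∫⁻ x in ⋃ z : Zd d, Metric.ball (latPt d 1 z) (1 / 2), c * auxW d (y - x) :=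
          (lintegral_iUnion (fun _ => measurableSet_ball) hd _).symm
      _ ≤ ∫⁻ x, c * auxW d (y - x) := setLIntegral_le_lintegral _ _
      _ = c * ∫⁻ x, auxW d (y - x) :=
          lintegral_const_mul _ ((auxW_meas d).comp (by fun_prop))
      _ = _ := by rw [lintegral_sub_left_eq_self]

theorem aux_pt {d : ℕ} (φ : SchwartzMap (Euc d) ℂ) : ∃ C : ℝ, 0 ≤ C ∧ ∀ y,
    (1 + ‖y‖) * ‖φ y‖ ≤ C * (1 + ‖y‖) ^ (-((d : ℝ) + 1)) := by
  refine ⟨2 ^ (d + 2) * (Finset.Iic (d + 2, 0)).sup (fun m => SchwartzMap.seminorm ℝ m.1 m.2) φ,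
    by positivity, fun y => ?_⟩
  have h := SchwartzMap.one_add_le_sup_seminorm_apply (𝕜 := ℝ) (m := (d + 2, 0)) (k := d + 2) (n := 0)
    le_rfl le_rfl φ y
  rw [norm_iteratedFDeriv_zero] at h
  have hp : 0 < 1 + ‖y‖ := by positivity
  rw [Real.rpow_neg hp.le, ← div_eq_mul_inv, le_div_iff₀ (by positivity)]
  refine le_trans (le_of_eq ?_) h
  have : (1 + ‖y‖) ^ ((d : ℝ) + 1) = (1 + ‖y‖) ^ (d + 1) := by
    rw [← Real.rpow_natCast]; push_cast; rfl
  rw [this]; ring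

theorem aux_latPt (d : ℕ) (h : ℝ) (hh : 0 < h) (x : Euc d) (z : Zd d) :
    h⁻¹ • (x - latPt d h z) = h⁻¹ • x - latPt d 1 z := by
  ext j
  simp [latPt]
  field_simp

theorem aux_norm2 {α : Type*} [MeasurableSpace α] {μ : Measure α} (f : Lp ℂ 2 μ) :
    ‖f‖ₑ ^ 2 = ∫⁻ x, ‖f x‖ₑ ^ 2 ∂μ := by
  rw [Lp.enorm_def]
  have := eLpNorm_nnreal_pow_eq_lintegral (p := 2) (μ := μ) (f := f) (by norm_num)
  simpa using this

theorem aux_main (d : ℕ) (φ : SchwartzMap (Euc d) ℂ) (G : Euc d → ℂ) (S : ℝ≥0∞)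
    (hS : ∀ y : Euc d, ∑' z : Zd d, auxW d (y - latPt d 1 z) ≤ S) (h : ℝ) (hh : 0 < h)
    (K : ℝ) (hK : 0 ≤ K)
    (hb : ∀ x z, ‖(G (latPt d h z) - G x) * conj (φ (h⁻¹ • (x - latPt d h z)))‖ₑ ≤
      ENNReal.ofReal K * auxW d (h⁻¹ • (x - latPt d h z)))
    (T : L2 d →L[ℂ] l2h d h)
    (hT : ∀ u : L2 d, ∀ z : Zd d,
          (T u : Zd d → ℂ) z =
            (h ^ d)⁻¹ * ∫ x, (G (latPt d h z) - G x) *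
              conj (φ (h⁻¹ • (x - latPt d h z))) * (u : Euc d → ℂ) x) (u : L2 d) :
    ‖T u‖ₑ ^ 2 ≤ ENNReal.ofReal K ^ 2 * ((∫⁻ y, auxW d y) * S) * ‖u‖ₑ ^ 2 := by
  set A := ∫⁻ y, auxW d y with hA
  set H := ENNReal.ofReal (h ^ d) with hH
  set k := ENNReal.ofReal K with hk
  have hH0 : H ≠ 0 := by simp [hH]; positivity
  have hHt : H ≠ ∞ := by simp [hH]
  have hu : AEMeasurable (fun x => ‖u x‖ₑ) (volume : Measure (Euc d)) :=
    (Lp.aestronglyMeasurable u).enorm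
  have hwm : ∀ z : Zd d, Measurable fun x => auxW d (h⁻¹ • (x - latPt d h z)) := fun z =>
    (auxW_meas d).comp (by fun_prop)
  have h1 : ∀ z, ‖(T u : Zd d → ℂ) z‖ₑ ≤
      H⁻¹ * (k * ∫⁻ x, auxW d (h⁻¹ • (x - latPt d h z)) * ‖u x‖ₑ) := by
    intro z
    rw [hT, enorm_mul]
    have : ‖((h : ℂ) ^ d)⁻¹‖ₑ = H⁻¹ := by
      rw [enorm_inv (by simp [hh.ne']), ← Complex.ofReal_pow, hH, ← ofReal_norm_eq_enorm,
        Complex.norm_real, Real.norm_of_nonneg (by positivity)]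
    rw [Complex.ofReal_inv, Complex.ofReal_pow, this]
    gcongr
    refine (enorm_integral_le_lintegral_enorm _).trans ?_
    rw [← lintegral_const_mul' _ _ (by simp [hk])]
    refine lintegral_mono fun x => ?_
    rw [enorm_mul, ← mul_assoc]
    gcongr
    exact hb x z
  have h2 : ∀ z, ‖(T u : Zd d → ℂ) z‖ₑ ^ 2 ≤
      H⁻¹ * (k ^ 2 * A) * ∫⁻ x, auxW d (h⁻¹ • (x - latPt d h z)) * ‖u x‖ₑ ^ 2 := by
    intro z
    calc _ ≤ (H⁻¹ * (k * ∫⁻ x, auxW d (h⁻¹ • (x - latPt d h z)) * ‖u x‖ₑ)) ^ 2 := by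
          gcongr; exact h1 z
      _ = H⁻¹ ^ 2 * k ^ 2 * (∫⁻ x, auxW d (h⁻¹ • (x - latPt d h z)) * ‖u x‖ₑ) ^ 2 := by ring
      _ ≤ H⁻¹ ^ 2 * k ^ 2 * ((∫⁻ x, auxW d (h⁻¹ • (x - latPt d h z))) *
            ∫⁻ x, auxW d (h⁻¹ • (x - latPt d h z)) * ‖u x‖ₑ ^ 2) := by
          gcongr
          exact aux_cs _ _ _ (hwm z).aemeasurable hu
      _ = (H⁻¹ * H) * (H⁻¹ * (k ^ 2 * A) *
            ∫⁻ x, auxW d (h⁻¹ • (x - latPt d h z)) * ‖u x‖ₑ ^ 2) := by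
          rw [aux_scale d h hh _ _ (auxW_meas d)]; ring
      _ = _ := by rw [ENNReal.inv_mul_cancel hH0 hHt, one_mul]
  have hlat : ∀ f : Zd d → ℝ≥0∞, ∫⁻ z, f z ∂(latMeas d h) = H * ∑' z, f z := by
    intro f
    rw [latMeas, lintegral_smul_measure, lintegral_count, smul_eq_mul]
  rw [aux_norm2, aux_norm2, hlat]
  calc _ ≤ H * ∑' z : Zd d, H⁻¹ * (k ^ 2 * A) *
          ∫⁻ x, auxW d (h⁻¹ • (x - latPt d h z)) * ‖u x‖ₑ ^ 2 := by
        gcongr with z; exact h2 z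
    _ = (H⁻¹ * H) * (k ^ 2 * A * ∫⁻ x, ∑' z : Zd d,
          auxW d (h⁻¹ • (x - latPt d h z)) * ‖u x‖ₑ ^ 2) := by
        rw [ENNReal.tsum_mul_left, lintegral_tsum]
        · ring
        · exact fun z => (hwm z).aemeasurable.mul (hu.pow_const 2)
    _ = k ^ 2 * A * ∫⁻ x, ∑' z : Zd d,
          auxW d (h⁻¹ • (x - latPt d h z)) * ‖u x‖ₑ ^ 2 := by
        rw [ENNReal.inv_mul_cancel hH0 hHt, one_mul]
    _ ≤ k ^ 2 * A * ∫⁻ x, S * ‖u x‖ₑ ^ 2 := by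
        gcongr with x
        rw [ENNReal.tsum_mul_right]
        gcongr
        simp only [aux_latPt d h hh]
        exact hS _
    _ = _ := by
        rw [lintegral_const_mul'' _ (hu.pow_const 2)]; ring

/-- Let `φ ∈ 𝒮(ℝ^d)` and `G : ℝ^d → ℂ` be uniformly continuous.  Then the
commutator `G P_h − P_h G`, i.e. the operator
`u ↦ (z ↦ h^{−d} ∫ (G(z) − G(x)) conj(φ(h⁻¹(x−z))) u(x) dx)`, tends to `0` in operator norm
`B(L²(ℝ^d), ℓ²(hℤ^d))` as `h → 0`. -/
theorem commutator_mul_projection_tendsto_zero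
    (d : ℕ) (φ : SchwartzMap (Euc d) ℂ) (G : Euc d → ℂ)
    (hG : UniformContinuous G) :
    ∀ ε > (0 : ℝ), ∃ h₀ > (0 : ℝ), ∀ h : ℝ, 0 < h → h < h₀ →
      ∀ T : L2 d →L[ℂ] l2h d h,
        (∀ u : L2 d, ∀ z : Zd d,
          (T u : Zd d → ℂ) z =
            (h ^ d)⁻¹ * ∫ x, (G (latPt d h z) - G x) *
              conj (φ (h⁻¹ • (x - latPt d h z))) * (u : Euc d → ℂ) x) →
        ‖T‖ ≤ ε := by
  intro ε hε
  obtain ⟨S, hSt, hS⟩ := aux_sum d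
  obtain ⟨C, hC, hφ⟩ := aux_pt φ
  set A := ∫⁻ y, auxW d y with hA
  have hAt : A < ∞ := auxW_fin d
  set M : ℝ := (A * S).toReal with hM
  have hM0 : 0 ≤ M := ENNReal.toReal_nonneg
  have hMS : A * S = ENNReal.ofReal M := (ENNReal.ofReal_toReal (ENNReal.mul_lt_top hAt hSt).ne).symm
  set η := ε / ((C + 1) * (M + 1)) with hη
  have hη0 : 0 < η := by positivity
  obtain ⟨δ, hδ, hGδ⟩ := aux_growth G hG η hη0
  refine ⟨δ, hδ, fun h hh hhδ T hT => ?_⟩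
  refine T.opNorm_le_bound hε.le fun u => ?_
  have hkey := aux_main d φ G S hS h hh (η * C) (by positivity) ?_ T hT u
  · have h3 : ‖T u‖ ^ 2 ≤ (η * C) ^ 2 * M * ‖u‖ ^ 2 := by
      rw [← hA, hMS, ← ofReal_norm_eq_enorm, ← ofReal_norm_eq_enorm, ← ENNReal.ofReal_pow (by positivity),
        ← ENNReal.ofReal_pow (by positivity), ← ENNReal.ofReal_pow (by positivity),
        ← ENNReal.ofReal_mul (by positivity), ← ENNReal.ofReal_mul (by positivity),
        ENNReal.ofReal_le_ofReal_iff (by positivity)] at hkey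
      exact hkey
    have h4 : (η * C) ^ 2 * M ≤ ε ^ 2 := by
      have h5 : η * (C + 1) * (M + 1) = ε := by rw [hη]; field_simp
      have h6 : (η * C) ^ 2 ≤ (η * (C + 1)) ^ 2 := by gcongr; linarith
      calc (η * C) ^ 2 * M ≤ (η * (C + 1)) ^ 2 * (M + 1) ^ 2 := by
            gcongr; nlinarith
        _ = ε ^ 2 := by rw [← mul_pow, h5]
    refine le_of_sq_le_sq ?_ (by positivity)
    rw [mul_pow]
    exact h3.trans (by gcongr)
  · intro x z
    set y := h⁻¹ • (x - latPt d h z) with hy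
    have hxy : ‖latPt d h z - x‖ = h * ‖y‖ := by
      rw [hy, norm_smul, norm_inv, Real.norm_of_nonneg hh.le, norm_sub_rev]
      field_simp
    rw [← ofReal_norm_eq_enorm, auxW, ← ENNReal.ofReal_mul (by positivity)]
    apply ENNReal.ofReal_le_ofReal
    rw [norm_mul, RCLike.norm_conj]
    have h7 : ‖G (latPt d h z) - G x‖ ≤ η * (1 + ‖y‖) := by
      refine (hGδ _ _).trans ?_
      rw [hxy]
      gcongr
      rw [div_le_iff₀ hδ, mul_comm]
      gcongr
    calc _ ≤ η * (1 + ‖y‖) * ‖φ y‖ := by gcongr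
      _ = η * ((1 + ‖y‖) * ‖φ y‖) := by ring
      _ ≤ η * (C * (1 + ‖y‖) ^ (-((d : ℝ) + 1))) := mul_le_mul_of_nonneg_left (hφ y) hη0.le
      _ = _ := by ring
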